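/- arXiv:2006.05054 — 2 statements merged into one kernel-verified Lean document; each statement's English description precedes it below -/
import Mathlib

section
/- Let μ be a probability measure on a measurable space Ω and Q : Ω → ℝ a measurable function, and let ε ∈ (0,1). For N ∈ ℕ with N ≥ 1, define for a sample vector (w₁,…,w_N) ∈ Ω^N the empirical maximum Q̂_N = max_{1 ≤ i ≤ N} Q(wᵢ). Then the N-fold product measure of the set of sample vectors for which μ{w ∈ Ω : Q(w) > Q̂_N} > ε is at most (1−ε)^N. -/
open MeasureTheory

theorem bad_aux {Ω : Type*} [MeasurableSpace Ω] (μ : Measure Ω)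
    [IsProbabilityMeasure μ] (Q : Ω → ℝ) (hQ : Measurable Q)
    (ε : ℝ) (hε : ε ∈ Set.Ioo (0 : ℝ) 1) :
    μ {w | ENNReal.ofReal ε < μ {v | Q v > Q w}} ≤ ENNReal.ofReal (1 - ε) := by
  have key : ∀ t : ℝ, ENNReal.ofReal ε < μ {v | Q v > t} →
      μ {v | Q v ≤ t} ≤ ENNReal.ofReal (1 - ε) := by
    intro t ht
    have hm : MeasurableSet {v | Q v > t} := measurableSet_lt measurable_const hQ
    have hc : {v | Q v ≤ t} = {v | Q v > t}ᶜ := by ext v; simp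
    rw [hc, prob_compl_eq_one_sub hm, ENNReal.ofReal_sub _ hε.1.le, ENNReal.ofReal_one]
    exact tsub_le_tsub_left ht.le _
  have anti : ∀ s t : ℝ, s ≤ t → μ {v | Q v > t} ≤ μ {v | Q v > s} := by
    intro s t hst
    exact measure_mono fun v (hv : Q v > t) => lt_of_le_of_lt hst hv
  by_cases hmax : ∃ t : ℝ, ENNReal.ofReal ε < μ {v | Q v > t} ∧
      ∀ s, ENNReal.ofReal ε < μ {v | Q v > s} → s ≤ t
  · obtain ⟨t, ht, hs⟩ := hmax
    exact (measure_mono fun w hw => hs _ hw).trans (key t ht)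
  · push Not at hmax
    let S := {q : ℚ // ENNReal.ofReal ε < μ {v | Q v > (q : ℝ)}}
    have hsub : {w | ENNReal.ofReal ε < μ {v | Q v > Q w}} ⊆
        ⋃ q : S, {v | Q v ≤ ((q.1 : ℚ) : ℝ)} := by
      intro w hw
      obtain ⟨s, hs, hlt⟩ := hmax _ hw
      obtain ⟨q, h1, h2⟩ := exists_rat_btwn hlt
      exact Set.mem_iUnion.2 ⟨⟨q, hs.trans_le (anti _ _ h2.le)⟩, h1.le⟩
    refine (measure_mono hsub).trans ?_
    have hmono : Monotone fun q : S => {v | Q v ≤ ((q.1 : ℚ) : ℝ)} := by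
      intro a b hab v hv
      have h : ((a.1 : ℚ) : ℝ) ≤ ((b.1 : ℚ) : ℝ) := by exact_mod_cast hab
      exact le_trans hv h
    rw [hmono.directed_le.measure_iUnion]
    exact iSup_le fun q => key _ q.2

/-- For `N ≥ 1` i.i.d. samples with empirical maximum
`Q̂_N = max_{1 ≤ i ≤ N} Q(wᵢ) = ⨆ i, Q (f i)`, the product-measure probability
of the set of sample vectors for which `μ{Q > Q̂_N} > ε` is at most
`(1 - ε)^N`. -/
theorem scenario_bad_set_le {Ω : Type*} [MeasurableSpace Ω] (μ : Measure Ω)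
    [IsProbabilityMeasure μ] (Q : Ω → ℝ) (hQ : Measurable Q)
    (ε : ℝ) (hε : ε ∈ Set.Ioo (0 : ℝ) 1) (N : ℕ) (hN : 1 ≤ N) :
    (Measure.pi fun _ : Fin N => μ)
        {f : Fin N → Ω | μ {w : Ω | Q w > ⨆ i, Q (f i)} > ENNReal.ofReal ε}
      ≤ ENNReal.ofReal ((1 - ε) ^ N) := by
  have hsub : {f : Fin N → Ω | μ {w : Ω | Q w > ⨆ i, Q (f i)} > ENNReal.ofReal ε} ⊆
      Set.univ.pi fun _ : Fin N => {w | ENNReal.ofReal ε < μ {v | Q v > Q w}} := by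
    intro f hf i _
    refine lt_of_lt_of_le hf (measure_mono fun v hv => ?_)
    exact lt_of_le_of_lt (le_ciSup (f := fun i => Q (f i)) (Set.finite_range _).bddAbove i) hv
  refine (measure_mono hsub).trans ?_
  rw [Measure.pi_pi, Finset.prod_const, Finset.card_univ, Fintype.card_fin,
    ENNReal.ofReal_pow (by linarith [hε.2])]
  exact pow_le_pow_left' (bad_aux μ Q hQ ε hε) N
end

section
/- (Scenario bound used in the proof of Proposition 1.) Let μ be a probability measure on a measurable space Ω and Q : Ω → ℝ a measurable function. Fix ε ∈ (0,1) and β ∈ (0,1), and let N ∈ ℕ satisfy N ≥ ln(1/β) / ln(1/(1−ε)) and N ≥ 1. For (w₁,…,w_N) ∈ Ω^N let Q̂_N = max_{1 ≤ i ≤ N} Q(wᵢ). Then the N-fold product measure of the set {(w₁,…,w_N) ∈ Ω^N : μ{w ∈ Ω : Q(w) > Q̂_N} ≤ ε} is at least 1 − β. -/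
open MeasureTheory

/-- scenario bound used in the proof of Proposition 1: With
`ε, β ∈ (0,1)` and `N ≥ ln(1/β)/ln(1/(1-ε))`, `N ≥ 1`, the product-measure
probability that the empirical maximum `Q̂_N = ⨆ i, Q (f i)` satisfies
`μ{Q > Q̂_N} ≤ ε` is at least `1 - β`. -/
theorem scenario_good_set_ge {Ω : Type*} [MeasurableSpace Ω] (μ : Measure Ω)
    [IsProbabilityMeasure μ] (Q : Ω → ℝ) (hQ : Measurable Q)
    (ε β : ℝ) (hε : ε ∈ Set.Ioo (0 : ℝ) 1) (hβ : β ∈ Set.Ioo (0 : ℝ) 1)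
    (N : ℕ) (hNlog : (N : ℝ) ≥ Real.log (1 / β) / Real.log (1 / (1 - ε)))
    (hN : 1 ≤ N) :
    (Measure.pi fun _ : Fin N => μ)
        {f : Fin N → Ω | μ {w : Ω | Q w > ⨆ i, Q (f i)} ≤ ENNReal.ofReal ε}
      ≥ ENNReal.ofReal (1 - β) := by
  obtain ⟨hε0, hε1⟩ := hε
  obtain ⟨hβ0, hβ1⟩ := hβ
  have : Nonempty (Fin N) := ⟨⟨0, hN⟩⟩
  let B : Set ℝ := {t | ENNReal.ofReal ε < μ {w | Q w > t}}
  have hBl : ∀ s t, s ≤ t → t ∈ B → s ∈ B := by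
    intro s t hst ht
    exact lt_of_lt_of_le ht (measure_mono fun w hw => lt_of_le_of_lt hst hw)
  have hBm : MeasurableSet B := by
    have : IsLowerSet B := fun a b hab ha => hBl _ _ hab ha
    exact this.ordConnected.measurableSet
  have hIic : ∀ t ∈ B, μ (Q ⁻¹' Set.Iic t) ≤ ENNReal.ofReal (1 - ε) := by
    intro t ht
    have h1 : Q ⁻¹' Set.Iic t = {w | Q w > t}ᶜ := by
      ext w
      simp
    have hm : MeasurableSet {w | Q w > t} := measurableSet_lt measurable_const hQ
    rw [h1, prob_compl_eq_one_sub hm, ENNReal.ofReal_sub _ hε0.le, ENNReal.ofReal_one]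
    exact tsub_le_tsub_left (le_of_lt ht) _
  have : IsProbabilityMeasure (μ.map Q) := Measure.isProbabilityMeasure_map hQ.aemeasurable
  have hA : μ (Q ⁻¹' B) ≤ ENNReal.ofReal (1 - ε) := by
    rw [← Measure.map_apply hQ hBm, hBm.measure_eq_iSup_isCompact]
    refine iSup₂_le fun K hKB => iSup_le fun hK => ?_
    rcases K.eq_empty_or_nonempty with rfl | hne
    · simp
    · obtain ⟨k, hk, hmax⟩ := hK.exists_isGreatest hne
      calc μ.map Q K ≤ μ.map Q (Set.Iic k) := measure_mono fun x hx => hmax hx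
        _ = μ (Q ⁻¹' Set.Iic k) := Measure.map_apply hQ measurableSet_Iic
        _ ≤ _ := hIic k (hKB hk)
  have hpow : (1 - ε) ^ N ≤ β := by
    have h1 : 0 < 1 - ε := by linarith
    have hl : 0 < Real.log (1 / (1 - ε)) :=
      Real.log_pos (by rw [lt_div_iff₀ h1]; linarith)
    rw [ge_iff_le, div_le_iff₀ hl] at hNlog
    simp only [one_div, Real.log_inv] at hNlog
    rw [← Real.log_le_log_iff (pow_pos h1 N) hβ0, Real.log_pow]
    linarith
  set P := Measure.pi fun _ : Fin N => μ with hP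
  set G := {f : Fin N → Ω | μ {w : Ω | Q w > ⨆ i, Q (f i)} ≤ ENNReal.ofReal ε} with hG
  have hbad : P Gᶜ ≤ ENNReal.ofReal β := by
    have hsub : Gᶜ ⊆ Set.univ.pi fun _ => Q ⁻¹' B := by
      intro f hf i _
      have hf' : (⨆ i, Q (f i)) ∈ B := by
        have h3 : ¬ (μ {w : Ω | Q w > ⨆ i, Q (f i)} ≤ ENNReal.ofReal ε) := hf
        exact (not_le.mp h3 : ENNReal.ofReal ε < μ {w : Ω | Q w > ⨆ i, Q (f i)})
      exact hBl _ _ (le_ciSup (f := fun i => Q (f i)) (Set.finite_range _).bddAbove i) hf'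
    calc P Gᶜ ≤ P (Set.univ.pi fun _ => Q ⁻¹' B) := measure_mono hsub
      _ = μ (Q ⁻¹' B) ^ N := by rw [hP, Measure.pi_pi]; simp
      _ ≤ ENNReal.ofReal (1 - ε) ^ N := by gcongr
      _ = ENNReal.ofReal ((1 - ε) ^ N) := (ENNReal.ofReal_pow (by linarith) N).symm
      _ ≤ _ := ENNReal.ofReal_le_ofReal hpow
  rw [ge_iff_le, ENNReal.ofReal_sub _ hβ0.le, ENNReal.ofReal_one, tsub_le_iff_right]
  calc (1 : ENNReal) = P Set.univ := by rw [measure_univ]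
    _ = P (G ∪ Gᶜ) := by rw [Set.union_compl_self]
    _ ≤ P G + P Gᶜ := measure_union_le _ _
    _ ≤ _ := by gcongr
end
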